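/- Let $a < b$ be real and let $h : [a, b] \to \mathbb{R}$ be continuous. Then the function $F(\lambda) = \int_a^\lambda h(\xi)\sqrt{\lambda - \xi}\,d\xi$ is differentiable on $(a, b]$ with $F'(\lambda) = \frac{1}{2}\int_a^\lambda \frac{h(\xi)}{\sqrt{\lambda - \xi}}\,d\xi$, where the last integral is a convergent improper integral. -/

import Mathlib

open Set MeasureTheory intervalIntegral

/-!
Extending the square root by `0` to the negative reals turns the moving endpoint into a fixed one:
for `x ∈ [a, b]`, `∫ ξ in a..x, √(x - ξ) • h ξ = ∫ ξ in a..b, √(x - ξ) • h ξ`. The extended square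
root satisfies `|√y - √z| ≤ |y - z| / √|z|` for `z ≠ 0`, so the difference quotients in `x` at `l`
are dominated by `‖h ξ‖ / √|l - ξ|`, which is integrable, and one may differentiate under the
integral sign even though the kernel is not Lipschitz at `ξ = l`.
-/

lemma abs_sqrt_sub_sqrt_mul_sqrt_abs_le (y z : ℝ) : |√y - √z| * √|z| ≤ |y - z| := by
  rcases le_total z 0 with hz | hz
  · rw [Real.sqrt_eq_zero_of_nonpos hz, sub_zero, abs_of_nonneg (Real.sqrt_nonneg y),
      abs_of_nonpos hz]
    rcases le_total y 0 with hy | hy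
    · simp only [Real.sqrt_eq_zero_of_nonpos hy, zero_mul, abs_nonneg]
    · have hyz : 0 ≤ y - z := by linarith
      calc √y * √(-z) ≤ √(y - z) * √(y - z) := by gcongr <;> linarith
        _ = |y - z| := by rw [Real.mul_self_sqrt hyz, abs_of_nonneg hyz]
  · rw [abs_of_nonneg hz]
    rcases le_total y 0 with hy | hy
    · rw [Real.sqrt_eq_zero_of_nonpos hy, zero_sub, abs_neg, abs_of_nonneg (Real.sqrt_nonneg z),
        Real.mul_self_sqrt hz, abs_sub_comm]
      exact ((le_sub_self_iff z).2 hy).trans (le_abs_self _)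
    · calc |√y - √z| * √z ≤ |√y - √z| * (√y + √z) := by
            gcongr
            exact le_add_of_nonneg_left (Real.sqrt_nonneg y)
        _ = |(√y - √z) * (√y + √z)| := by rw [abs_mul, abs_of_nonneg (a := √y + √z) (by positivity)]
        _ = |y - z| := by
            rw [mul_comm, ← mul_self_sub_mul_self, Real.mul_self_sqrt hy, Real.mul_self_sqrt hz]

lemma intervalIntegrable_inv_sqrt (a b : ℝ) :
    IntervalIntegrable (fun x : ℝ => (√x)⁻¹) volume a b := by
  refine (intervalIntegrable_rpow' (r := -(1 / 2)) (by norm_num)).congr fun x _ => ?_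
  rw [Real.rpow_neg_eq_inv_rpow, ← Real.sqrt_eq_rpow, Real.sqrt_inv]

lemma intervalIntegrable_inv_sqrt_abs (a b : ℝ) :
    IntervalIntegrable (fun x : ℝ => (√|x|)⁻¹) volume a b := by
  have hneg : IntervalIntegrable (fun x : ℝ => (√(-x))⁻¹) volume a b := by
    simpa only [zero_sub, neg_neg] using (intervalIntegrable_inv_sqrt (-a) (-b)).comp_sub_left 0
  refine ((intervalIntegrable_inv_sqrt a b).add hneg).congr fun x _ => ?_
  rcases le_total x 0 with hx | hx
  · simp [Real.sqrt_eq_zero_of_nonpos hx, abs_of_nonpos hx]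
  · simp [Real.sqrt_eq_zero_of_nonpos (neg_nonpos.2 hx), abs_of_nonneg hx]

section

open Filter
open scoped Interval Topology

variable {E : Type*} [NormedAddCommGroup E] [NormedSpace ℝ E] {a b : ℝ}

lemma hasDerivAt_intervalIntegral_of_dominated_sub {𝕜 : Type*} [RCLike 𝕜] [NormedSpace 𝕜 E]
    {μ : Measure ℝ} {F : 𝕜 → ℝ → E} {F' : ℝ → E} {x₀ : 𝕜} {bound : ℝ → ℝ}
    (hF_int : ∀ᶠ x in 𝓝 x₀, IntervalIntegrable (F x) μ a b)
    (h_bound : ∀ᶠ x in 𝓝 x₀, ∀ᵐ t ∂μ, t ∈ Ι a b → ‖F x t - F x₀ t‖ ≤ bound t * ‖x - x₀‖)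
    (bound_integrable : IntervalIntegrable bound μ a b)
    (h_diff : ∀ᵐ t ∂μ, t ∈ Ι a b → HasDerivAt (F · t) (F' t) x₀) :
    HasDerivAt (fun x => ∫ t in a..b, F x t ∂μ) (∫ t in a..b, F' t ∂μ) x₀ := by
  have hF₀ : IntervalIntegrable (F x₀) μ a b := hF_int.self_of_nhds
  have h_slope : Tendsto (fun x => ∫ t in a..b, slope (F · t) x₀ x ∂μ) (𝓝[≠] x₀)
      (𝓝 (∫ t in a..b, F' t ∂μ)) := by
    refine tendsto_integral_filter_of_dominated_convergence bound ?_ ?_ bound_integrable ?_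
    · filter_upwards [nhdsWithin_le_nhds hF_int] with x hFx
      exact (hFx.sub hF₀).aestronglyMeasurable_restrict_uIoc.const_smul _
    · filter_upwards [nhdsWithin_le_nhds h_bound, self_mem_nhdsWithin] with x hx hne
      filter_upwards [hx] with t ht ht_mem
      rw [slope_def_module, norm_smul, norm_inv,
        inv_mul_le_iff₀ (norm_pos_iff.2 (sub_ne_zero.2 hne)), mul_comm]
      exact ht ht_mem
    · filter_upwards [h_diff] with t ht ht_mem
      exact (ht ht_mem).tendsto_slope
  refine hasDerivAt_iff_tendsto_slope.2 (h_slope.congr' ?_)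
  filter_upwards [nhdsWithin_le_nhds hF_int] with x hFx
  simp only [slope_def_module, intervalIntegral.integral_smul,
    intervalIntegral.integral_sub hFx hF₀]

lemma integral_eq_integral_of_forall_mem_Ioc_eq_zero {f : ℝ → E} {x : ℝ} (hx : x ∈ Icc a b)
    (hf : ∀ t ∈ Ioc x b, f t = 0) : ∫ t in a..x, f t = ∫ t in a..b, f t := by
  rw [integral_of_le hx.1, integral_of_le (hx.1.trans hx.2)]
  refine (setIntegral_eq_of_subset_of_forall_sdiff_eq_zero measurableSet_Ioc
    (Ioc_subset_Ioc_right hx.2) fun t ht => hf t ?_).symm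
  exact ⟨not_le.1 fun htx => ht.2 ⟨ht.1.1, htx⟩, ht.1.2⟩

lemma intervalIntegrable_of_inv_sqrt_abs_sub_smul {h : ℝ → E} {l : ℝ}
    (hh : IntervalIntegrable (fun t => (√|l - t|)⁻¹ • h t) volume a b) :
    IntervalIntegrable h volume a b := by
  have hcont : ContinuousOn (fun t => √|l - t|) (uIcc a b) := by fun_prop
  refine (hh.continuousOn_smul hcont).congr_ae (ae_restrict_of_ae ?_)
  filter_upwards [Measure.ae_ne volume l] with t ht
  exact smul_inv_smul₀ (Real.sqrt_ne_zero'.2 (abs_pos.2 (sub_ne_zero.2 ht.symm))) _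

lemma hasDerivAt_integral_sqrt_sub_smul {h : ℝ → E} {l : ℝ}
    (hh : IntervalIntegrable (fun t => (√|l - t|)⁻¹ • h t) volume a b) :
    HasDerivAt (fun x => ∫ t in a..b, √(x - t) • h t)
      ((1 / 2 : ℝ) • ∫ t in a..b, (√(l - t))⁻¹ • h t) l := by
  rw [← intervalIntegral.integral_smul]
  refine hasDerivAt_intervalIntegral_of_dominated_sub (.of_forall fun x => ?_)
    (.of_forall fun x => ?_) hh.norm ?_
  · exact (intervalIntegrable_of_inv_sqrt_abs_sub_smul hh).continuousOn_smul (by fun_prop)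
  · filter_upwards [Measure.ae_ne volume l] with t ht _
    have hpos : 0 < √|l - t| := Real.sqrt_pos.2 (abs_pos.2 (sub_ne_zero.2 ht.symm))
    have hsqrt : |√(x - t) - √(l - t)| ≤ (√|l - t|)⁻¹ * |x - l| := by
      rw [← div_eq_inv_mul, le_div_iff₀ hpos, ← sub_sub_sub_cancel_right x l t]
      exact abs_sqrt_sub_sqrt_mul_sqrt_abs_le _ _
    calc ‖√(x - t) • h t - √(l - t) • h t‖ = |√(x - t) - √(l - t)| * ‖h t‖ := by
          rw [← sub_smul, norm_smul, Real.norm_eq_abs]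
      _ ≤ (√|l - t|)⁻¹ * |x - l| * ‖h t‖ := by gcongr
      _ = ‖(√|l - t|)⁻¹ • h t‖ * ‖x - l‖ := by
          rw [norm_smul, Real.norm_of_nonneg (inv_nonneg.2 hpos.le), Real.norm_eq_abs,
            mul_right_comm]
  · filter_upwards [Measure.ae_ne volume l] with t ht _
    have hsqrt := (Real.hasDerivAt_sqrt (sub_ne_zero.2 ht.symm)).comp_sub_const l t
    simpa only [one_div, mul_inv, mul_smul] using hsqrt.smul_const (h t)

lemma intervalIntegrable_inv_sqrt_abs_sub_smul {h : ℝ → E} (hc : ContinuousOn h (uIcc a b))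
    (l : ℝ) : IntervalIntegrable (fun t => (√|l - t|)⁻¹ • h t) volume a b := by
  have hweight : IntervalIntegrable (fun t => (√|l - t|)⁻¹) volume a b := by
    simpa only [sub_sub_cancel] using
      (intervalIntegrable_inv_sqrt_abs (l - a) (l - b)).comp_sub_left l
  exact hweight.smul_continuousOn hc

theorem stmt5_general [CompleteSpace E] {h : ℝ → E} {l : ℝ} (hl : l ∈ Icc a b)
    (hh : IntervalIntegrable (fun ξ => (√|l - ξ|)⁻¹ • h ξ) volume a b) :
    IntervalIntegrable (fun ξ => (√(l - ξ))⁻¹ • h ξ) volume a l ∧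
      HasDerivWithinAt (fun x => ∫ ξ in a..x, √(x - ξ) • h ξ)
        ((1 / 2 : ℝ) • ∫ ξ in a..l, (√(l - ξ))⁻¹ • h ξ) (Icc a b) l := by
  have hzero {x t : ℝ} (hxt : x < t) : √(x - t) = 0 :=
    Real.sqrt_eq_zero_of_nonpos (sub_nonpos.2 hxt.le)
  have hF : ∀ x ∈ Icc a b, ∫ ξ in a..x, √(x - ξ) • h ξ = ∫ ξ in a..b, √(x - ξ) • h ξ :=
    fun x hx => integral_eq_integral_of_forall_mem_Ioc_eq_zero hx fun t ht => by
      rw [hzero ht.1, zero_smul]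
  have hF' : ∫ ξ in a..l, (√(l - ξ))⁻¹ • h ξ = ∫ ξ in a..b, (√(l - ξ))⁻¹ • h ξ :=
    integral_eq_integral_of_forall_mem_Ioc_eq_zero hl fun t ht => by
      rw [hzero ht.1, inv_zero, zero_smul]
  constructor
  · refine (hh.mono_set (uIcc_subset_uIcc_left (Icc_subset_uIcc hl))).congr fun t ht => ?_
    rw [uIoc_of_le hl.1] at ht
    simp only [abs_of_nonneg (sub_nonneg.2 ht.2)]
  · rw [hF']
    exact (hasDerivAt_integral_sqrt_sub_smul hh).hasDerivWithinAt.congr hF (hF l hl)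

end

/-- Abel-type differentiation identity: `F(λ) = ∫_a^λ h(ξ)√(λ-ξ) dξ` is differentiable
on `(a, b]` with `F'(λ) = ½ ∫_a^λ h(ξ)/√(λ-ξ) dξ`, the last integral being a convergent
improper integral. -/
theorem stmt5 (a b : ℝ) (hab : a < b) (h : ℝ → ℝ) (hc : ContinuousOn h (Set.Icc a b))
    (F : ℝ → ℝ) (hF : ∀ l, F l = ∫ ξ in a..l, h ξ * Real.sqrt (l - ξ)) :
    ∀ l ∈ Set.Ioc a b,
      IntervalIntegrable (fun ξ => h ξ / Real.sqrt (l - ξ)) volume a l ∧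
      HasDerivWithinAt F ((1 / 2) * ∫ ξ in a..l, h ξ / Real.sqrt (l - ξ)) (Set.Iic b) l := by
  intro l hl
  have hIcc : Icc a b ∈ nhdsWithin l (Iic b) := by
    rw [← Iic_inter_Ici]
    exact inter_mem_nhdsWithin _ (Ici_mem_nhds hl.1)
  obtain rfl : F = fun x => ∫ ξ in a..x, h ξ * √(x - ξ) := funext hF
  simp only [mul_comm (h _), div_eq_inv_mul (h _)]
  exact (stmt5_general (Ioc_subset_Icc_self hl) (intervalIntegrable_inv_sqrt_abs_sub_smul
    (uIcc_of_le hab.le ▸ hc) l)).imp_right (·.mono_of_mem_nhdsWithin hIcc)
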